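/- Let G be a connected graph on n vertices, and consider any weighted random walk on G: the Markov chain that, given positive weights w(e) on the edges, moves from u to a neighbour v with probability w(u,v)/w(u), where w(u)=Σ_{x:{u,x}∈E} w(u,x). Then the vertex cover time of this walk satisfies C_G ≥ (n/4)·log(n/2). -/

import Mathlib

open scoped ENNReal Classical

-- Probability of the length-`t` trajectory `f 0, f 1, …, f t` for the Markov chain with
-- transition probabilities `P`, started at `u`.
noncomputable def chainTrajProb {V : Type*} [Fintype V] (P : V → V → ℝ) (u : V) {t : ℕ}
    (f : Fin (t + 1) → V) : ℝ :=
  (if f 0 = u then (1 : ℝ) else 0) * ∏ i : Fin t, P (f i.castSucc) (f i.succ)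

-- `chainUncov P u t` : the probability that the chain started at `u` has NOT visited every
-- state by time `t`.
noncomputable def chainUncov {V : Type*} [Fintype V] (P : V → V → ℝ) (u : V) (t : ℕ) : ℝ :=
  ∑ f : Fin (t + 1) → V, if ∀ x : V, ∃ i, f i = x then 0 else chainTrajProb P u f

-- Expected vertex cover time of the chain started at `u`, as `∑_{t ≥ 0} Pr(cover time > t)`.
noncomputable def chainCoverTime {V : Type*} [Fintype V] (P : V → V → ℝ) (u : V) : ℝ≥0∞ :=
  ∑' t : ℕ, ENNReal.ofReal (chainUncov P u t)

/-!
Let `h_y(x)` be the expected hitting time of `y` from `x`, let `π` be the stationary distribution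
and `φ(x) = ∑ z, π(z) h_x(z)`. Reversibility gives `h_y(x) - h_x(y) = φ(y) - φ(x)`, and the commute
time `h_y(x) + h_x(y)` is at least the return time `1 / π(y)`. Hence the hitting times corrected by
the potential `-φ / 2` satisfy `h_y(x) - φ(y) / 2 + φ(x) / 2 ≥ 1 / (2 π(y))`, which is at least
`n / 4` for the at least `n / 2` vertices `y` with `π(y) ≤ 2 / n`.

Matthews' argument is applied to these vertices with `-φ / 2` as a terminal reward: replacing the
expected time to cover `S` by `F(S, x) = E_x[T_S - φ(X_{T_S}) / 2]`, the sum over `y ∈ S` of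
`F(S, x) - F(S \ {y}, x)` is at least `n / 4`, so `F(S, x) + φ(x) / 2` is at least `n / 4` times
the harmonic number of `|S|`. Starting at a light vertex of minimal `φ` makes the reward harmless.
-/

open Matrix Finset Filter Topology

section

variable {V : Type*} [Fintype V] {P : Matrix V V ℝ}

/-- The transition matrix of an irreducible Markov chain on a finite state space. -/
structure IsIrreducibleChain (P : Matrix V V ℝ) : Prop extends P.IsIrreducible where
  mulVec_one : P *ᵥ 1 = 1

namespace IsIrreducibleChain

lemma mulVec_const (hP : IsIrreducibleChain P) (c : ℝ) :
    P *ᵥ Function.const V c = Function.const V c := by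
  have hconst : Function.const V c = c • (1 : V → ℝ) := by ext; simp
  rw [hconst, mulVec_smul, hP.mulVec_one]

lemma mulVec_nonneg (hP : IsIrreducibleChain P) {f : V → ℝ} (hf : ∀ x, 0 ≤ f x) (x : V) :
    0 ≤ (P *ᵥ f) x :=
  sum_nonneg fun y _ => mul_nonneg (hP.nonneg x y) (hf y)

lemma eq_of_mulVec_le_of_forall_le (hP : IsIrreducibleChain P) {f : V → ℝ} {a b : V}
    (hmin : ∀ x, f a ≤ f x) (hsuper : (P *ᵥ f) a ≤ f a) (hab : 0 < P a b) : f b = f a := by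
  have hterm : ∀ y ∈ univ, 0 ≤ P a y * (f y - f a) :=
    fun y _ => mul_nonneg (hP.nonneg a y) (sub_nonneg.2 (hmin y))
  have hsum : ∑ y, P a y * (f y - f a) = (P *ᵥ f) a - f a :=
    calc ∑ y, P a y * (f y - f a)
      _ = (P *ᵥ (f - Function.const V (f a))) a := rfl
      _ = (P *ᵥ f) a - f a := by rw [mulVec_sub, hP.mulVec_const]; rfl
  have hzero : ∑ y, P a y * (f y - f a) = 0 :=
    le_antisymm (by linarith) (sum_nonneg hterm)
  have hb := (sum_eq_zero_iff_of_nonneg hterm).1 hzero b (mem_univ b)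
  exact sub_eq_zero.1 ((mul_eq_zero.1 hb).resolve_left hab.ne')

theorem minimum_principle (hP : IsIrreducibleChain P) {S : Finset V} (hS : S.Nonempty)
    {f : V → ℝ} {c : ℝ} (hbdry : ∀ x ∈ S, c ≤ f x) (hsuper : ∀ x ∉ S, (P *ᵥ f) x ≤ f x) (x : V) :
    c ≤ f x := by
  have : Nonempty V := ⟨x⟩
  obtain ⟨m, hm⟩ := Finite.exists_min f
  refine le_trans ?_ (hm x)
  by_contra! hlt
  obtain ⟨s, hs⟩ := hS
  let : Quiver V := P.toQuiver
  obtain ⟨path, -⟩ := hP.connected m s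
  have hpath : ∀ {z}, Quiver.Path m z → f z = f m := by
    intro z q
    induction q with
    | nil => rfl
    | @cons a b _ hab ih =>
      have haS : a ∉ S := fun haS => (hbdry a haS).not_gt (ih ▸ hlt)
      rw [← ih]
      exact hP.eq_of_mulVec_le_of_forall_le (fun y => ih ▸ hm y) (hsuper a haS) hab.down
  exact (hbdry s hs).not_gt (hpath path ▸ hlt)

end IsIrreducibleChain

variable {π : V → ℝ}

lemma dotProduct_mulVec_comm_of_detailedBalance (hrev : ∀ x y, π x * P x y = π y * P y x)
    (f g : V → ℝ) : (π * f) ⬝ᵥ (P *ᵥ g) = (π * g) ⬝ᵥ (P *ᵥ f) := by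
  simp only [dotProduct, mulVec, Pi.mul_apply, mul_sum]
  rw [sum_comm]
  refine sum_congr rfl fun x _ => sum_congr rfl fun y _ => ?_
  linear_combination f y * g x * hrev y x

lemma vecMul_eq_of_detailedBalance (hone : P *ᵥ 1 = 1)
    (hrev : ∀ x y, π x * P x y = π y * P y x) : π ᵥ* P = π := by
  ext y
  calc (π ᵥ* P) y
    _ = ∑ x, π y * P y x := sum_congr rfl fun x _ => hrev x y
    _ = π y * (P *ᵥ 1) y := by rw [← mul_sum, mulVec, dotProduct_one]
    _ = π y := by rw [hone, Pi.one_apply, mul_one]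

/-! ### The Dirichlet problem -/

section Dirichlet

variable [DecidableEq V]

/-- The matrix of the Dirichlet problem on `V` with boundary `S`: the identity on the rows in `S`,
the Laplacian `1 - P` on the others. -/
def dirichletMatrix (P : Matrix V V ℝ) (S : Finset V) : Matrix V V ℝ :=
  of fun x y => if x ∈ S then (1 : Matrix V V ℝ) x y else (1 - P) x y

lemma dirichletMatrix_mulVec (S : Finset V) (f : V → ℝ) (x : V) :
    (dirichletMatrix P S *ᵥ f) x = if x ∈ S then f x else f x - (P *ᵥ f) x := by
  split_ifs with hx
  · have hrow : (dirichletMatrix P S *ᵥ f) x = ((1 : Matrix V V ℝ) *ᵥ f) x := by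
      simp only [dirichletMatrix, mulVec, dotProduct, of_apply, if_pos hx]
    rw [hrow, one_mulVec]
  · have hrow : (dirichletMatrix P S *ᵥ f) x = ((1 - P) *ᵥ f) x := by
      simp only [dirichletMatrix, mulVec, dotProduct, of_apply, if_neg hx]
    rw [hrow, sub_mulVec, one_mulVec, Pi.sub_apply]

lemma IsIrreducibleChain.isUnit_dirichletMatrix (hP : IsIrreducibleChain P) {S : Finset V}
    (hS : S.Nonempty) : IsUnit (dirichletMatrix P S) := by
  rw [← mulVec_injective_iff_isUnit]
  refine (injective_iff_map_eq_zero (dirichletMatrix P S).mulVecLin).2 fun f hf => ?_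
  have hzero (x : V) : (if x ∈ S then f x else f x - (P *ᵥ f) x) = 0 := by
    rw [← dirichletMatrix_mulVec]
    exact congrFun hf x
  have hbdry : ∀ x ∈ S, f x = 0 := fun x hx => by simpa [hx] using hzero x
  have hharm : ∀ x ∉ S, (P *ᵥ f) x = f x := fun x hx => by
    simpa [hx, sub_eq_zero, eq_comm] using hzero x
  ext x
  refine le_antisymm (neg_nonneg.1 ?_) ?_
  · exact hP.minimum_principle hS (f := -f) (fun x hx => by simp [hbdry x hx])
      (fun x hx => by simp [mulVec_neg, hharm x hx]) x
  · exact hP.minimum_principle hS (fun x hx => (hbdry x hx).ge) (fun x hx => (hharm x hx).le) x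

/-- The expectation, as a function of the starting state, of `τ + b(X_τ)`, where `τ` is the hitting
time of `S`. It is defined as the solution of the Dirichlet problem `f = b` on `S` and
`f = 1 + P f` off `S`, which is meaningful for an irreducible chain and `S` nonempty. -/
noncomputable def hittingValue (P : Matrix V V ℝ) (S : Finset V) (b : V → ℝ) : V → ℝ :=
  (dirichletMatrix P S)⁻¹ *ᵥ fun x => if x ∈ S then b x else 1

namespace IsIrreducibleChain

variable {S : Finset V}

lemma dirichletMatrix_mulVec_hittingValue (hP : IsIrreducibleChain P) (hS : S.Nonempty)
    (b : V → ℝ) :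
    dirichletMatrix P S *ᵥ hittingValue P S b = fun x => if x ∈ S then b x else 1 := by
  rw [hittingValue, mulVec_mulVec,
    mul_nonsing_inv _ ((isUnit_iff_isUnit_det _).1 (hP.isUnit_dirichletMatrix hS)), one_mulVec]

lemma hittingValue_of_mem (hP : IsIrreducibleChain P) (b : V → ℝ) {x : V} (hx : x ∈ S) :
    hittingValue P S b x = b x := by
  have h := congrFun (hP.dirichletMatrix_mulVec_hittingValue ⟨x, hx⟩ b) x
  simpa only [dirichletMatrix_mulVec, if_pos hx] using h

lemma hittingValue_of_notMem (hP : IsIrreducibleChain P) (hS : S.Nonempty) (b : V → ℝ) {x : V}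
    (hx : x ∉ S) : hittingValue P S b x = 1 + (P *ᵥ hittingValue P S b) x := by
  have h := congrFun (hP.dirichletMatrix_mulVec_hittingValue hS b) x
  simp only [dirichletMatrix_mulVec, if_neg hx] at h
  linarith

lemma eq_hittingValue (hP : IsIrreducibleChain P) (hS : S.Nonempty) {b f : V → ℝ}
    (hbdry : ∀ x ∈ S, f x = b x) (hstep : ∀ x ∉ S, f x = 1 + (P *ᵥ f) x) :
    f = hittingValue P S b := by
  apply mulVec_injective_iff_isUnit.2 (hP.isUnit_dirichletMatrix hS)
  rw [hP.dirichletMatrix_mulVec_hittingValue hS]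
  ext x
  rw [dirichletMatrix_mulVec]
  split_ifs with hx
  · exact hbdry x hx
  · linarith [hstep x hx]

end IsIrreducibleChain

/-! ### Hitting times -/

/-- The expected hitting time of `y`, as a function of the starting state. -/
noncomputable def hittingTime (P : Matrix V V ℝ) (y : V) : V → ℝ :=
  hittingValue P {y} 0

namespace IsIrreducibleChain

lemma hittingTime_self (hP : IsIrreducibleChain P) (y : V) : hittingTime P y y = 0 :=
  hP.hittingValue_of_mem 0 (mem_singleton_self y)

lemma hittingTime_of_ne (hP : IsIrreducibleChain P) {x y : V} (hxy : x ≠ y) :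
    hittingTime P y x = 1 + (P *ᵥ hittingTime P y) x :=
  hP.hittingValue_of_notMem (singleton_nonempty y) 0 (notMem_singleton.2 hxy)

lemma hittingTime_nonneg (hP : IsIrreducibleChain P) (y x : V) : 0 ≤ hittingTime P y x := by
  refine hP.minimum_principle (singleton_nonempty y) (fun z hz => ?_) (fun z hz => ?_) x
  · rw [mem_singleton.1 hz, hP.hittingTime_self]
  · linarith [hP.hittingTime_of_ne (notMem_singleton.1 hz)]

theorem hittingTime_triangle (hP : IsIrreducibleChain P) (x y z : V) :
    hittingTime P y z ≤ hittingTime P x z + hittingTime P y x := by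
  let gap : V → ℝ :=
    hittingTime P x + Function.const V (hittingTime P y x) - hittingTime P y
  have hgap (t : V) : gap t = hittingTime P x t + hittingTime P y x - hittingTime P y t := rfl
  have hmulVec (t : V) : (P *ᵥ gap) t =
      (P *ᵥ hittingTime P x) t + hittingTime P y x - (P *ᵥ hittingTime P y) t := by
    simp only [gap, mulVec_sub, mulVec_add, hP.mulVec_const]
    rfl
  refine sub_nonneg.1 (hP.minimum_principle (singleton_nonempty x) (f := gap) ?_ ?_ z)
  · intro t ht
    rw [mem_singleton.1 ht, hgap, hP.hittingTime_self, zero_add, sub_self]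
  · intro t ht
    have hstep := hP.hittingTime_of_ne (notMem_singleton.1 ht)
    rw [hmulVec, hgap]
    rcases eq_or_ne t y with rfl | hty
    · linarith [hP.hittingTime_self t, hP.mulVec_nonneg (hP.hittingTime_nonneg t) t]
    · linarith [hP.hittingTime_of_ne hty]

theorem returnTime_le_commuteTime (hP : IsIrreducibleChain P) {x y : V} (hxy : x ≠ y) :
    1 + (P *ᵥ hittingTime P y) y ≤ hittingTime P x y + hittingTime P y x := by
  have hmono : (P *ᵥ hittingTime P y) y ≤
      (P *ᵥ (hittingTime P x + Function.const V (hittingTime P y x))) y :=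
    dotProduct_le_dotProduct_of_nonneg_left (hP.hittingTime_triangle x y) (hP.nonneg y)
  rw [mulVec_add, hP.mulVec_const, Pi.add_apply, Function.const_apply] at hmono
  linarith [hP.hittingTime_of_ne hxy.symm]

lemma hittingTime_sub_mulVec (hP : IsIrreducibleChain P) (y : V) :
    hittingTime P y - P *ᵥ hittingTime P y = 1 - Pi.single y (1 + (P *ᵥ hittingTime P y) y) := by
  ext x
  rcases eq_or_ne x y with rfl | hxy
  · simp [hP.hittingTime_self]
  · simp [hxy, hP.hittingTime_of_ne hxy]

end IsIrreducibleChain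

/-! ### Return times and reversibility -/

namespace IsIrreducibleChain

theorem stationary_mul_returnTime (hP : IsIrreducibleChain P) (hstat : π ᵥ* P = π)
    (hsum : ∑ x, π x = 1) (y : V) : π y * (1 + (P *ᵥ hittingTime P y) y) = 1 := by
  have h := congrArg (π ⬝ᵥ ·) (hP.hittingTime_sub_mulVec y)
  simp only [dotProduct_sub, dotProduct_mulVec, hstat, dotProduct_one, hsum,
    dotProduct_single, sub_self] at h
  linarith

theorem dotProduct_hittingTime_sub_mulVec (hP : IsIrreducibleChain P) (hstat : π ᵥ* P = π)
    (hsum : ∑ x, π x = 1) (f : V → ℝ) (y : V) :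
    (π * f) ⬝ᵥ (hittingTime P y - P *ᵥ hittingTime P y) = π ⬝ᵥ f - f y := by
  have hreturn := hP.stationary_mul_returnTime hstat hsum y
  rw [hP.hittingTime_sub_mulVec, dotProduct_sub, dotProduct_one, dotProduct_single, Pi.mul_apply]
  simp only [Pi.mul_apply, dotProduct]
  linear_combination -f y * hreturn

theorem hittingTime_sub_hittingTime (hP : IsIrreducibleChain P)
    (hrev : ∀ x y, π x * P x y = π y * P y x) (hsum : ∑ x, π x = 1) (x y : V) :
    hittingTime P y x - hittingTime P x y = π ⬝ᵥ hittingTime P y - π ⬝ᵥ hittingTime P x := by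
  have hstat := vecMul_eq_of_detailedBalance hP.mulVec_one hrev
  have hpair := hP.dotProduct_hittingTime_sub_mulVec hstat hsum
  have hxy := hpair (hittingTime P x) y
  have hyx := hpair (hittingTime P y) x
  have hdiag : (π * hittingTime P x) ⬝ᵥ hittingTime P y =
      (π * hittingTime P y) ⬝ᵥ hittingTime P x :=
    sum_congr rfl fun z _ => mul_right_comm _ _ _
  rw [dotProduct_sub] at hxy hyx
  linarith [dotProduct_mulVec_comm_of_detailedBalance hrev (hittingTime P x) (hittingTime P y)]

end IsIrreducibleChain

/-- Minus half the expected hitting time of `x` from the stationary distribution `π`. Correcting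
the hitting times by this potential makes them symmetric for a reversible chain. -/
noncomputable def hittingPotential (π : V → ℝ) (P : Matrix V V ℝ) (x : V) : ℝ :=
  -(π ⬝ᵥ hittingTime P x) / 2

theorem IsIrreducibleChain.inv_le_hittingTime_add_hittingPotential_sub (hP : IsIrreducibleChain P)
    (hrev : ∀ x y, π x * P x y = π y * P y x) (hsum : ∑ x, π x = 1) {x y : V} (hxy : x ≠ y) :
    (π y)⁻¹ / 2 ≤ hittingTime P y x + hittingPotential π P y - hittingPotential π P x := by
  have hreturn := eq_inv_of_mul_eq_one_right
    (hP.stationary_mul_returnTime (vecMul_eq_of_detailedBalance hP.mulVec_one hrev) hsum y)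
  have hcommute := hP.returnTime_le_commuteTime hxy
  have hcycle := hP.hittingTime_sub_hittingTime hrev hsum x y
  simp only [hittingPotential]
  linarith

/-! ### Matthews' argument with a terminal reward -/

variable {b : V → ℝ}

/-- The expectation, as a function of the starting state, of `T + b(X_T)`, where `T` is the time
needed to visit every element of `S`; thus `T` is the first time `t` at which `X_t ∈ S` and the rest
of `S` has been visited, when `S` is nonempty. The recursion conditions on the first element of `S`
that is visited. -/
noncomputable def coverValue (P : Matrix V V ℝ) (b : V → ℝ) (S : Finset V) : V → ℝ :=
  if S.Nonempty then
    hittingValue P S fun x => if _ : x ∈ S then coverValue P b (S.erase x) x else 0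
  else b
termination_by #S
decreasing_by exact card_erase_lt_of_mem ‹_›

/-- The sum over `y ∈ S` of the costs of adding `y` to the set `S \ {y}` to be covered. -/
noncomputable def totalCoverIncrement (P : Matrix V V ℝ) (b : V → ℝ) (S : Finset V) : V → ℝ :=
  ∑ y ∈ S, (coverValue P b S - coverValue P b (S.erase y))

lemma totalCoverIncrement_apply (S : Finset V) (x : V) : totalCoverIncrement P b S x =
    ∑ y ∈ S, (coverValue P b S x - coverValue P b (S.erase y) x) := by
  simp [totalCoverIncrement]

lemma coverValue_empty : coverValue P b ∅ = b := by
  rw [coverValue, if_neg Finset.not_nonempty_empty]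

namespace IsIrreducibleChain

lemma coverValue_erase_self (hP : IsIrreducibleChain P) (S : Finset V) (x : V) :
    coverValue P b (S.erase x) x = coverValue P b S x := by
  by_cases hx : x ∈ S
  · rw [coverValue.eq_1 P b S, if_pos ⟨x, hx⟩, hP.hittingValue_of_mem _ hx, dif_pos hx]
  · rw [erase_eq_of_notMem hx]

lemma coverValue_of_notMem (hP : IsIrreducibleChain P) {S : Finset V} (hS : S.Nonempty) {x : V}
    (hx : x ∉ S) : coverValue P b S x = 1 + (P *ᵥ coverValue P b S) x := by
  rw [coverValue, if_pos hS]
  exact hP.hittingValue_of_notMem hS _ hx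

lemma coverValue_eq_sum_erase (hP : IsIrreducibleChain P) {S : Finset V} (hS : S.Nonempty) {x : V}
    (hx : x ∉ S) :
    coverValue P b S x = 1 + ∑ y, P x y * coverValue P b (S.erase y) y := by
  simp only [hP.coverValue_erase_self]
  exact hP.coverValue_of_notMem hS hx

lemma coverValue_singleton (hP : IsIrreducibleChain P) (y : V) :
    coverValue P b {y} = hittingTime P y + Function.const V (b y) := by
  rw [coverValue, if_pos (singleton_nonempty y)]
  refine (hP.eq_hittingValue (singleton_nonempty y) (fun x hx => ?_) fun x hx => ?_).symm
  · obtain rfl := mem_singleton.1 hx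
    simp [hP.hittingTime_self, coverValue_empty]
  · rw [mulVec_add, hP.mulVec_const, Pi.add_apply, Pi.add_apply,
      hP.hittingTime_of_ne (notMem_singleton.1 hx), add_assoc]

lemma totalCoverIncrement_singleton (hP : IsIrreducibleChain P) (x y : V) :
    totalCoverIncrement P b {y} x = hittingTime P y x + b y - b x := by
  simp [totalCoverIncrement, hP.coverValue_singleton, coverValue_empty]

lemma totalCoverIncrement_of_mem (hP : IsIrreducibleChain P) {S : Finset V} {z : V} (hz : z ∈ S) :
    totalCoverIncrement P b S z = totalCoverIncrement P b (S.erase z) z := by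
  rw [totalCoverIncrement_apply, totalCoverIncrement_apply, ← add_sum_erase _ _ hz,
    hP.coverValue_erase_self, sub_self, zero_add]
  refine sum_congr rfl fun y _ => ?_
  rw [erase_right_comm, hP.coverValue_erase_self (S.erase y)]

lemma mulVec_totalCoverIncrement (hP : IsIrreducibleChain P) {S : Finset V} (hS : S.Nontrivial)
    {x : V} (hx : x ∉ S) :
    (P *ᵥ totalCoverIncrement P b S) x = totalCoverIncrement P b S x := by
  rw [totalCoverIncrement_apply, totalCoverIncrement, mulVec_sum, Finset.sum_apply]
  refine sum_congr rfl fun y _ => ?_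
  rw [mulVec_sub, Pi.sub_apply, hP.coverValue_of_notMem hS.nonempty hx,
    hP.coverValue_of_notMem hS.erase_nonempty fun hmem => hx (mem_of_mem_erase hmem)]
  ring

theorem le_totalCoverIncrement (hP : IsIrreducibleChain P) {K : ℝ} {S : Finset V}
    (hS : S.Nonempty) (hK : ∀ y ∈ S, ∀ x ≠ y, K ≤ hittingTime P y x + b y - b x)
    {x : V} (hx : x ∉ S) : K ≤ totalCoverIncrement P b S x := by
  induction S using Finset.strongInduction generalizing x with
  | H S ih =>
    rcases hS.exists_eq_singleton_or_nontrivial with ⟨y, rfl⟩ | hS₂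
    · rw [hP.totalCoverIncrement_singleton]
      exact hK y (mem_singleton_self y) x (notMem_singleton.1 hx)
    · refine hP.minimum_principle hS (fun z hz => ?_)
        (fun z hz => (hP.mulVec_totalCoverIncrement hS₂ hz).le) x
      rw [hP.totalCoverIncrement_of_mem hz]
      exact ih _ (erase_ssubset hz) hS₂.erase_nonempty
        (fun y hy => hK y (mem_of_mem_erase hy)) (notMem_erase z S)

theorem mul_harmonic_add_le_coverValue (hP : IsIrreducibleChain P) {K : ℝ} {S : Finset V}
    (hK : ∀ y ∈ S, ∀ x ≠ y, K ≤ hittingTime P y x + b y - b x) {x : V} (hx : x ∉ S) :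
    K * harmonic #S + b x ≤ coverValue P b S x := by
  induction hcard : #S generalizing S with
  | zero => simp [card_eq_zero.1 hcard, coverValue_empty]
  | succ k ih =>
    have hincr : K ≤ ∑ y ∈ S, (coverValue P b S x - coverValue P b (S.erase y) x) := by
      rw [← totalCoverIncrement_apply]
      exact hP.le_totalCoverIncrement (card_pos.1 (by lia)) hK hx
    have herase : ∀ y ∈ S, K * harmonic k + b x ≤ coverValue P b (S.erase y) x := fun y hy =>
      ih (fun z hz => hK z (mem_of_mem_erase hz)) (fun hmem => hx (mem_of_mem_erase hmem))
        (by rw [card_erase_of_mem hy, hcard, Nat.add_sub_cancel])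
    have hle : K ≤ (k + 1) * (coverValue P b S x - (K * harmonic k + b x)) :=
      calc K
        _ ≤ ∑ _ ∈ S, (coverValue P b S x - (K * harmonic k + b x)) :=
          hincr.trans (sum_le_sum fun y hy => sub_le_sub_left (herase y hy) _)
        _ = (k + 1) * (coverValue P b S x - (K * harmonic k + b x)) := by
          rw [sum_const, hcard, nsmul_eq_mul, Nat.cast_add_one]
    have hdiv : K * ((k : ℝ) + 1)⁻¹ ≤ coverValue P b S x - (K * harmonic k + b x) := by
      rw [← div_eq_mul_inv, div_le_iff₀' (by positivity)]
      exact hle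
    rw [harmonic_succ]
    push_cast
    linarith

end IsIrreducibleChain

end Dirichlet

/-! ### Trajectories and the cover time -/

lemma coe_subset_range_cons_iff {α : Type*} [DecidableEq α] {S : Finset α} {u : α} (hu : u ∉ S)
    {t : ℕ} (f : Fin (t + 1) → α) :
    (S : Set α) ⊆ Set.range (Fin.cons u f : Fin (t + 1 + 1) → α) ↔
      (S.erase (f 0) : Set α) ⊆ Set.range f := by
  rw [Fin.range_cons, Set.subset_insert_iff_of_notMem (mem_coe.not.2 hu), coe_erase,
    Set.sdiff_singleton_subset_iff, Set.insert_eq_of_mem (Set.mem_range_self 0)]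

/-- The probability that the chain started at `u` has not visited all of `S` by time `t`. -/
noncomputable def uncoveredProb (P : Matrix V V ℝ) (S : Finset V) (u : V) (t : ℕ) : ℝ :=
  ∑ f : Fin (t + 1) → V, if (S : Set V) ⊆ Set.range f then 0 else chainTrajProb P u f

lemma chainTrajProb_nonneg (hP : ∀ x y, 0 ≤ P x y) (u : V) {t : ℕ} (f : Fin (t + 1) → V) :
    0 ≤ chainTrajProb P u f :=
  mul_nonneg (by split_ifs <;> simp) (prod_nonneg fun _ _ => hP _ _)

lemma chainTrajProb_cons (u x : V) {t : ℕ} (f : Fin (t + 1) → V) :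
    chainTrajProb P u (Fin.cons x f : Fin (t + 1 + 1) → V) =
      if x = u then ∑ y, P u y * chainTrajProb P y f else 0 := by
  split_ifs with hx
  · simp [chainTrajProb, Fin.prod_univ_succ, hx]
  · simp [chainTrajProb, hx]

lemma uncoveredProb_nonneg (hP : ∀ x y, 0 ≤ P x y) (S : Finset V) (u : V) (t : ℕ) :
    0 ≤ uncoveredProb P S u t :=
  sum_nonneg fun f _ => by
    split_ifs
    exacts [le_rfl, chainTrajProb_nonneg hP u f]

lemma uncoveredProb_le_chainUncov (hP : ∀ x y, 0 ≤ P x y) (S : Finset V) (u : V) (t : ℕ) :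
    uncoveredProb P S u t ≤ chainUncov P u t := by
  refine sum_le_sum fun f _ => ?_
  by_cases hcov : ∀ x, ∃ i, f i = x
  · have hS : (S : Set V) ⊆ Set.range f := fun x _ => hcov x
    rw [if_pos hS, if_pos hcov]
  · rw [if_neg hcov]
    split_ifs
    exacts [chainTrajProb_nonneg hP u f, le_rfl]

lemma uncoveredProb_empty (u : V) (t : ℕ) : uncoveredProb P ∅ u t = 0 := by
  simp [uncoveredProb]

lemma uncoveredProb_zero {S : Finset V} (hS : S.Nonempty) {u : V} (hu : u ∉ S) :
    uncoveredProb P S u 0 = 1 := by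
  obtain ⟨s, hs⟩ := hS
  have hne : ¬ (S : Set V) ⊆ {u} := fun h => hu (Set.mem_singleton_iff.1 (h hs) ▸ hs)
  rw [uncoveredProb, ← (Equiv.funUnique (Fin 1) V).symm.sum_comp, sum_eq_single u]
  · simp [chainTrajProb, hne, Set.range_unique]
  · intro x _ hx
    simp [chainTrajProb, hx]
  · simp

lemma uncoveredProb_succ [DecidableEq V] {S : Finset V} {u : V} (hu : u ∉ S) (t : ℕ) :
    uncoveredProb P S u (t + 1) = ∑ y, P u y * uncoveredProb P (S.erase y) y t := by
  have hfirst (f : Fin (t + 1) → V) (y : V) :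
      (if (S.erase (f 0) : Set V) ⊆ Set.range f then 0 else P u y * chainTrajProb P y f) =
        P u y * if (S.erase y : Set V) ⊆ Set.range f then 0 else chainTrajProb P y f := by
    rcases eq_or_ne (f 0) y with rfl | hne
    · rw [mul_ite, mul_zero]
    · simp [chainTrajProb, hne]
  calc uncoveredProb P S u (t + 1)
    _ = ∑ f : Fin (t + 1) → V, if (S.erase (f 0) : Set V) ⊆ Set.range f then 0
          else ∑ y, P u y * chainTrajProb P y f := by
      rw [uncoveredProb, ← (Fin.consEquiv fun _ => V).sum_comp, Fintype.sum_prod_type,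
        Fintype.sum_eq_single u]
      · refine sum_congr rfl fun f _ => ?_
        have hcover := coe_subset_range_cons_iff hu f
        simp only [Fin.consEquiv, Equiv.coe_fn_mk, chainTrajProb_cons, hcover, if_true]
      · intro x hx
        simp [Fin.consEquiv, chainTrajProb_cons, hx]
    _ = ∑ f : Fin (t + 1) → V, ∑ y, P u y *
          if (S.erase y : Set V) ⊆ Set.range f then 0 else chainTrajProb P y f := by
      refine sum_congr rfl fun f _ => ?_
      rw [← sum_congr rfl fun y _ => hfirst f y]
      split_ifs
      exacts [sum_const_zero.symm, rfl]
    _ = ∑ y, P u y * uncoveredProb P (S.erase y) y t := by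
      rw [sum_comm]
      simp only [uncoveredProb, mul_sum]

lemma ofReal_le_tsum_ofReal_of_forall_le {a : ℕ → ℝ} (ha : ∀ t, 0 ≤ a t) {r M : ℝ}
    (hr : ∀ N, r ≤ ∑ t ∈ range N, a t + M * a N) :
    ENNReal.ofReal r ≤ ∑' t, ENNReal.ofReal (a t) := by
  by_cases hsum : Summable a
  · rw [← ENNReal.ofReal_tsum_of_nonneg ha hsum]
    have htendsto : Tendsto (fun N => ∑ t ∈ range N, a t + M * a N) atTop (𝓝 (∑' t, a t)) := by
      simpa using hsum.hasSum.tendsto_sum_nat.add (hsum.tendsto_atTop_zero.const_mul M)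
    exact ENNReal.ofReal_le_ofReal (ge_of_tendsto' htendsto hr)
  · have htop : ∑' t, ENNReal.ofReal (a t) = ⊤ := by
      by_contra hfin
      exact hsum (by simpa [ENNReal.toReal_ofReal, ha] using ENNReal.summable_toReal hfin)
    rw [htop]
    exact le_top

namespace IsIrreducibleChain

variable [DecidableEq V] {b : V → ℝ}

theorem coverValue_le_add_sum_uncoveredProb (hP : IsIrreducibleChain P) {c M : ℝ}
    (hM : ∀ S x, coverValue P b S x ≤ c + M) (N : ℕ) {S : Finset V} (hb : ∀ y ∈ S, b y ≤ c)
    (hS : S.Nonempty) {x : V} (hx : x ∉ S) :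
    coverValue P b S x ≤
      c + (∑ t ∈ range N, uncoveredProb P S x t + M * uncoveredProb P S x N) := by
  induction N generalizing S x with
  | zero => simpa [uncoveredProb_zero hS hx] using hM S x
  | succ N ih =>
    have hnext (y : V) : coverValue P b (S.erase y) y ≤
        c + (∑ t ∈ range N, uncoveredProb P (S.erase y) y t +
          M * uncoveredProb P (S.erase y) y N) := by
      rcases (S.erase y).eq_empty_or_nonempty with hempty | hne
      · have hy : y ∈ S := by
          by_contra hy
          exact hS.ne_empty (erase_eq_of_notMem hy ▸ hempty)
        simpa [hempty, coverValue_empty, uncoveredProb_empty] using hb y hy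
      · exact ih (fun z hz => hb z (mem_of_mem_erase hz)) hne (notMem_erase y S)
    have hconst : ∑ y, P x y * c = c := congrFun (hP.mulVec_const c) x
    calc coverValue P b S x
      _ = 1 + ∑ y, P x y * coverValue P b (S.erase y) y := hP.coverValue_eq_sum_erase hS hx
      _ ≤ 1 + ∑ y, P x y * (c + (∑ t ∈ range N, uncoveredProb P (S.erase y) y t +
            M * uncoveredProb P (S.erase y) y N)) := by
        gcongr with y
        exacts [hP.nonneg x y, hnext y]
      _ = c + (∑ t ∈ range (N + 1), uncoveredProb P S x t + M * uncoveredProb P S x (N + 1)) := by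
        simp only [sum_range_succ', uncoveredProb_zero hS hx, uncoveredProb_succ hx, mul_add,
          sum_add_distrib, hconst, mul_left_comm _ M, ← mul_sum]
        rw [sum_comm]
        simp only [← mul_sum]
        ring

theorem ofReal_coverValue_sub_le_chainCoverTime (hP : IsIrreducibleChain P) {c : ℝ} {S : Finset V}
    (hb : ∀ y ∈ S, b y ≤ c) {x : V} (hx : x ∉ S) (hbx : b x ≤ c) :
    ENNReal.ofReal (coverValue P b S x - c) ≤ chainCoverTime P x := by
  rcases S.eq_empty_or_nonempty with rfl | hS
  · rw [coverValue_empty, ENNReal.ofReal_of_nonpos (sub_nonpos.2 hbx)]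
    exact zero_le
  obtain ⟨M, hM⟩ : ∃ M, ∀ S x, coverValue P b S x ≤ c + M := by
    obtain ⟨B, hB⟩ := (Set.finite_range fun q : Finset V × V => coverValue P b q.1 q.2).bddAbove
    exact ⟨B - c, fun S x => by linarith [hB (Set.mem_range_self (S, x))]⟩
  calc ENNReal.ofReal (coverValue P b S x - c)
    _ ≤ ∑' t, ENNReal.ofReal (uncoveredProb P S x t) :=
      ofReal_le_tsum_ofReal_of_forall_le (uncoveredProb_nonneg hP.nonneg S x) fun N =>
        sub_le_iff_le_add'.2 (hP.coverValue_le_add_sum_uncoveredProb hM N hb hS hx)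
    _ ≤ chainCoverTime P x := ENNReal.tsum_le_tsum fun t =>
      ENNReal.ofReal_le_ofReal (uncoveredProb_le_chainUncov hP.nonneg S x t)

-- For `b = 0` this is Matthews' lower bound.
theorem ofReal_mul_harmonic_le_chainCoverTime (hP : IsIrreducibleChain P) {K : ℝ} {S : Finset V}
    {u : V} (hu : u ∉ S) (hb : ∀ y ∈ S, b y ≤ b u)
    (hK : ∀ y ∈ S, ∀ x ≠ y, K ≤ hittingTime P y x + b y - b x) :
    ENNReal.ofReal (K * harmonic #S) ≤ chainCoverTime P u :=
  (ENNReal.ofReal_le_ofReal (le_sub_iff_add_le.2 (hP.mul_harmonic_add_le_coverValue hK hu))).trans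
    (hP.ofReal_coverValue_sub_le_chainCoverTime hb hu le_rfl)

end IsIrreducibleChain

/-! ### Reversible chains -/

lemma IsIrreducibleChain.stationary_pos (hP : IsIrreducibleChain P) (hstat : π ᵥ* P = π)
    (hπ : π ∈ stdSimplex ℝ V) (y : V) : 0 < π y :=
  (hπ.1 y).lt_of_ne' (left_ne_zero_of_mul_eq_one (hP.stationary_mul_returnTime hstat hπ.2 y))

lemma card_sub_inv_le_card_filter_le (hπ : π ∈ stdSimplex ℝ V) {a : ℝ} (ha : 0 < a) :
    Fintype.card V - a⁻¹ ≤ #{x | π x ≤ a} := by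
  have hheavy : (#{x | ¬ π x ≤ a} : ℝ) * a ≤ 1 :=
    calc (#{x | ¬ π x ≤ a} : ℝ) * a
      _ = #{x | ¬ π x ≤ a} • a := (nsmul_eq_mul _ _).symm
      _ ≤ ∑ x with ¬ π x ≤ a, π x :=
        card_nsmul_le_sum _ _ _ fun x hx => (not_le.1 (mem_filter.1 hx).2).le
      _ ≤ ∑ x, π x := sum_le_univ_sum_of_nonneg hπ.1
      _ = 1 := hπ.2
  have hcard : (#{x | π x ≤ a} : ℝ) + #{x | ¬ π x ≤ a} = Fintype.card V :=
    mod_cast card_filter_add_card_filter_not _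
  rw [← le_div_iff₀ ha, one_div] at hheavy
  linarith

lemma log_le_harmonic_card_erase {α : Type*} [DecidableEq α] {A : Finset α} {u : α} (hu : u ∈ A)
    {r : ℝ} (hr : 0 < r) (hA : r ≤ #A) : Real.log r ≤ harmonic #(A.erase u) := by
  refine (Real.log_le_log hr ?_).trans (log_add_one_le_harmonic _)
  exact_mod_cast hA.trans_eq (congrArg Nat.cast (card_erase_add_one hu).symm)

theorem stmt10_general (hP : IsIrreducibleChain P) (hπ : π ∈ stdSimplex ℝ V)
    (hrev : ∀ x y, π x * P x y = π y * P y x) :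
    ∃ u : V,
      ENNReal.ofReal (((Fintype.card V : ℝ) / 4) * Real.log ((Fintype.card V : ℝ) / 2)) ≤
        chainCoverTime P u := by
  have : Nonempty V := not_isEmpty_iff.1 fun _ => by simpa using hπ.2
  set n : ℝ := (Fintype.card V : ℝ)
  have hn : 0 < n := Nat.cast_pos.2 Fintype.card_pos
  let light : Finset V := {y | π y ≤ 2 / n}
  have hcard : n / 2 ≤ #light := by
    have h := card_sub_inv_le_card_filter_le hπ (div_pos two_pos hn)
    rw [inv_div] at h
    linarith
  have hlight : light.Nonempty := card_pos.1 (Nat.cast_pos.1 ((half_pos hn).trans_le hcard))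
  obtain ⟨u, hu, hmax⟩ := light.exists_max_image (hittingPotential π P) hlight
  have hcost : ∀ y ∈ light.erase u, ∀ x ≠ y,
      n / 4 ≤ hittingTime P y x + hittingPotential π P y - hittingPotential π P x := by
    intro y hy x hxy
    have hpos := hP.stationary_pos (vecMul_eq_of_detailedBalance hP.mulVec_one hrev) hπ y
    have hinv := inv_anti₀ hpos (mem_filter.1 (mem_of_mem_erase hy)).2
    rw [inv_div] at hinv
    linarith [hP.inv_le_hittingTime_add_hittingPotential_sub hrev hπ.2 hxy]
  refine ⟨u, le_trans (ENNReal.ofReal_le_ofReal ?_) (hP.ofReal_mul_harmonic_le_chainCoverTime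
    (notMem_erase u light) (fun y hy => hmax y (mem_of_mem_erase hy)) hcost)⟩
  gcongr
  exact log_le_harmonic_card_erase hu (half_pos hn) hcard

/-! ### Weighted walks -/

variable {G : SimpleGraph V} [DecidableRel G.Adj] {w : Sym2 V → ℝ}

/-- The total weight `w(a)` of the edges at the vertex `a`. -/
def vertexWeight (G : SimpleGraph V) [DecidableRel G.Adj] (w : Sym2 V → ℝ) (a : V) : ℝ :=
  ∑ x ∈ G.neighborFinset a, w s(a, x)

/-- The transition matrix of the random walk on `G` with edge weights `w`. A vertex without
neighbours has a zero row. -/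
noncomputable def weightedWalk (G : SimpleGraph V) [DecidableRel G.Adj] (w : Sym2 V → ℝ) :
    Matrix V V ℝ :=
  fun a b => if G.Adj a b then w s(a, b) / vertexWeight G w a else 0

lemma vertexWeight_pos [Nontrivial V] (hconn : G.Connected) (hw : ∀ e ∈ G.edgeSet, 0 < w e)
    (a : V) : 0 < vertexWeight G w a := by
  obtain ⟨b, hab⟩ := hconn.preconnected.exists_adj_of_nontrivial a
  exact sum_pos (fun x hx => hw _ ((G.mem_neighborFinset a x).1 hx))
    ⟨b, (G.mem_neighborFinset a b).2 hab⟩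

lemma isIrreducible_weightedWalk [Nontrivial V] (hconn : G.Connected)
    (hw : ∀ e ∈ G.edgeSet, 0 < w e) : (weightedWalk G w).IsIrreducible where
  nonneg a b := by
    unfold weightedWalk
    split_ifs with hab
    exacts [(div_pos (hw _ hab) (vertexWeight_pos hconn hw a)).le, le_rfl]
  connected := by
    let : Quiver V := (weightedWalk G w).toQuiver
    have edge {a b : V} (hab : G.Adj a b) : a ⟶ b := by
      refine ⟨?_⟩
      rw [weightedWalk, if_pos hab]
      exact div_pos (hw _ hab) (vertexWeight_pos hconn hw a)
    have hpath {a b : V} (walk : G.Walk a b) : Nonempty (Quiver.Path a b) := by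
      induction walk with
      | nil => exact ⟨.nil⟩
      | cons hab _ ih => exact ih.map (Quiver.Hom.toPath (edge hab)).comp
    intro a b
    obtain ⟨c, hac⟩ := hconn.preconnected.exists_adj_of_nontrivial a
    obtain ⟨path⟩ := hpath (hconn.preconnected c b).some
    exact ⟨(Quiver.Hom.toPath (edge hac)).comp path, by simp⟩

lemma isIrreducibleChain_weightedWalk [Nontrivial V] (hconn : G.Connected)
    (hw : ∀ e ∈ G.edgeSet, 0 < w e) : IsIrreducibleChain (weightedWalk G w) where
  toIsIrreducible := isIrreducible_weightedWalk hconn hw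
  mulVec_one := by
    ext a
    calc (weightedWalk G w *ᵥ 1) a
      _ = ∑ b ∈ G.neighborFinset a, w s(a, b) / vertexWeight G w a := by
        simp [mulVec, dotProduct, weightedWalk, G.neighborFinset_eq_filter, sum_filter]
      _ = vertexWeight G w a / vertexWeight G w a := (sum_div _ _ _).symm
      _ = 1 := div_self (vertexWeight_pos hconn hw a).ne'

/-- The stationary distribution of the weighted walk. -/
noncomputable def weightedWalkStationary (G : SimpleGraph V) [DecidableRel G.Adj]
    (w : Sym2 V → ℝ) (a : V) : ℝ :=
  vertexWeight G w a / ∑ x, vertexWeight G w x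

lemma weightedWalkStationary_mem_stdSimplex [Nontrivial V] (hconn : G.Connected)
    (hw : ∀ e ∈ G.edgeSet, 0 < w e) : weightedWalkStationary G w ∈ stdSimplex ℝ V := by
  have hpos := vertexWeight_pos hconn hw
  have htotal : 0 < ∑ x, vertexWeight G w x := sum_pos (fun x _ => hpos x) univ_nonempty
  refine ⟨fun a => (div_pos (hpos a) htotal).le, ?_⟩
  simp only [weightedWalkStationary, ← sum_div, div_self htotal.ne']

lemma weightedWalk_detailedBalance [Nontrivial V] (hconn : G.Connected)
    (hw : ∀ e ∈ G.edgeSet, 0 < w e) (a b : V) :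
    weightedWalkStationary G w a * weightedWalk G w a b =
      weightedWalkStationary G w b * weightedWalk G w b a := by
  by_cases hab : G.Adj a b
  · have ha := (vertexWeight_pos hconn hw a).ne'
    have hb := (vertexWeight_pos hconn hw b).ne'
    simp only [weightedWalkStationary, weightedWalk, if_pos hab, if_pos hab.symm,
      Sym2.eq_swap (a := b)]
    field_simp
  · simp only [weightedWalk, if_neg hab, if_neg fun hba : G.Adj b a => hab hba.symm, mul_zero]

lemma card_div_four_mul_log_nonpos [Subsingleton V] :
    ((Fintype.card V : ℝ) / 4) * Real.log ((Fintype.card V : ℝ) / 2) ≤ 0 := by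
  have hcard : (Fintype.card V : ℝ) ≤ 1 :=
    mod_cast Fintype.card_le_one_iff_subsingleton.2 inferInstance
  exact mul_nonpos_of_nonneg_of_nonpos (by positivity)
    (Real.log_nonpos (by positivity) (by linarith))

end

/-- Let `G` be a connected graph on `n` vertices and consider any weighted
random walk on `G` (with positive edge weights `w`, moving from `u` to a neighbour `v` with
probability `w(u,v)/w(u)`). Then its vertex cover time satisfies `C_G ≥ (n/4)·log(n/2)`. -/
theorem stmt10 {V : Type*} [Fintype V] [DecidableEq V] (G : SimpleGraph V)
    [DecidableRel G.Adj] (hconn : G.Connected)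
    (w : Sym2 V → ℝ) (hw : ∀ e ∈ G.edgeSet, 0 < w e) :
    ∃ u : V,
      ENNReal.ofReal (((Fintype.card V : ℝ) / 4) * Real.log ((Fintype.card V : ℝ) / 2)) ≤
        chainCoverTime
          (fun a b => if G.Adj a b then w s(a, b) / (∑ x ∈ G.neighborFinset a, w s(a, x))
            else 0) u := by
  rcases subsingleton_or_nontrivial V with _ | _
  · have hzero := ENNReal.ofReal_of_nonpos (card_div_four_mul_log_nonpos (V := V))
    exact ⟨hconn.nonempty.some, hzero.trans_le zero_le⟩
  · exact stmt10_general (isIrreducibleChain_weightedWalk hconn hw)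
      (weightedWalkStationary_mem_stdSimplex hconn hw) (weightedWalk_detailedBalance hconn hw)
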